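/- arXiv:1306.1386 — 2 statements merged into one kernel-verified Lean document; each statement's English description precedes it below -/
import Mathlib

section
/- Let G be a finite simple graph, e an edge of G, and α < 0 a real number. If G and G−e have the same number of zero signless Laplacian eigenvalues (equivalently, Q(G) and Q(G−e) have kernels of the same dimension), then S_α(G) < S_α(G−e), where G−e is the graph obtained from G by deleting the edge e. -/
/-!
Let `B = Q(G)` and `A = Q(G - e)`, with eigenvalues `b i`, `a j` and orthonormal eigenbases
`v i`, `u j`. The quadratic form of `Q` is a sum of squares over the edges, so `0 ≤ A ≤ B`
(`dotProduct_Q_mulVec_mono`), while the trace is the sum of the degrees, so `tr A < tr B`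
(`trace_Q_strictMono`).

The weights `w i j = ⟪u j, v i⟫ ^ 2` form a doubly stochastic matrix, and
`∑ j, w i j * a j = ⟪v i, A v i⟫ ≤ ⟪v i, B v i⟫ = b i`. The rest of the argument uses only these
facts, nonnegativity of the eigenvalues and the equality of the numbers of zeros
(`sum_rpow_lt_of_doublyStochastic`). A row with `b i = 0` is supported on the zeros of `a`; by
counting, a row with `b i ≠ 0` is then supported on the nonzero `a j`. As `x ↦ x ^ α` is convex
and decreasing for `α < 0`, averaging its tangent inequality at `b i` over such a row gives
`b i ^ α ≤ ∑ j, w i j * a j ^ α`, and summing over `i` gives the non-strict inequality. It is strict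
because the traces differ, which makes some `⟪v i, A v i⟫` strictly less than `b i`.
-/

open Matrix Finset

noncomputable section

namespace SLP

variable {V : Type*} [Fintype V] [DecidableEq V]

/-- The signless Laplacian matrix `Q(G) = D(G) + A(G)` of a finite simple graph. -/
def Q (G : SimpleGraph V) : Matrix V V ℝ :=
  letI : DecidableRel G.Adj := Classical.decRel _
  G.degMatrix ℝ + G.adjMatrix ℝ

lemma Q_isHermitian (G : SimpleGraph V) : (Q G).IsHermitian := by
  letI : DecidableRel G.Adj := Classical.decRel _
  have h : Q G = G.degMatrix ℝ + G.adjMatrix ℝ := rfl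
  rw [h, Matrix.IsHermitian]
  ext i j
  simp [Matrix.conjTranspose_apply, SimpleGraph.degMatrix, Matrix.diagonal,
    SimpleGraph.adjMatrix_apply, SimpleGraph.adj_comm]
  rcases eq_or_ne i j with rfl | hij
  · simp
  · simp [hij, Ne.symm hij]

/-- The (unordered) signless Laplacian eigenvalues of `G`, listed with multiplicity
(indexed by the vertices). -/
def eigs (G : SimpleGraph V) : V → ℝ := (Q_isHermitian G).eigenvalues

/-- `S α G`: the sum of the α-th (real) powers of the nonzero signless Laplacian
eigenvalues of `G`. -/
def S (α : ℝ) (G : SimpleGraph V) : ℝ :=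
  ∑ v ∈ Finset.univ.filter (fun v => eigs G v ≠ 0), eigs G v ^ α


/-! ### The quadratic form and the trace of `Q` -/

lemma dotProduct_Q_mulVec (G : SimpleGraph V) (x : V → ℝ) :
    letI : DecidableRel G.Adj := Classical.decRel _
    x ⬝ᵥ (Q G *ᵥ x) = (∑ i : V, ∑ j : V, if G.Adj i j then (x i + x j) ^ 2 else 0) / 2 := by
  let : DecidableRel G.Adj := Classical.decRel _
  have h : Q G = G.degMatrix ℝ + G.adjMatrix ℝ := rfl
  simp_rw [h, add_mulVec, dotProduct_add, SimpleGraph.dotProduct_mulVec_degMatrix,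
    SimpleGraph.dotProduct_mulVec_adjMatrix, ← sum_add_distrib, SimpleGraph.degree_eq_sum_if_adj,
    sum_mul, ite_mul, one_mul, zero_mul, ← sum_add_distrib, ite_add_ite, add_zero]
  rw [← add_self_div_two (∑ x_1 : V, ∑ x_2 : V, _)]
  conv_lhs => enter [1, 2, 2, i, 2, j]; rw [if_congr (SimpleGraph.adj_comm G i j) rfl rfl]
  conv_lhs => enter [1, 2]; rw [Finset.sum_comm]
  simp_rw [← sum_add_distrib, ite_add_ite]
  congr 2 with i
  congr 2 with j
  ring_nf

lemma dotProduct_Q_mulVec_nonneg (G : SimpleGraph V) (x : V → ℝ) : 0 ≤ x ⬝ᵥ (Q G *ᵥ x) := by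
  rw [dotProduct_Q_mulVec]
  positivity

lemma dotProduct_Q_mulVec_mono {G H : SimpleGraph V} (h : H ≤ G) (x : V → ℝ) :
    x ⬝ᵥ (Q H *ᵥ x) ≤ x ⬝ᵥ (Q G *ᵥ x) := by
  rw [dotProduct_Q_mulVec, dotProduct_Q_mulVec]
  gcongr with i _ j _
  split_ifs with h₁ h₂
  · exact le_rfl
  · exact absurd (h h₁) h₂
  · positivity
  · exact le_rfl

lemma trace_Q (G : SimpleGraph V) :
    letI : DecidableRel G.Adj := Classical.decRel _
    (Q G).trace = ∑ i : V, ∑ j : V, if G.Adj i j then (1 : ℝ) else 0 := by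
  let : DecidableRel G.Adj := Classical.decRel _
  have h : Q G = G.degMatrix ℝ + G.adjMatrix ℝ := rfl
  simp only [h, trace_add, SimpleGraph.trace_adjMatrix, add_zero, SimpleGraph.degMatrix,
    trace_diagonal, SimpleGraph.degree_eq_sum_if_adj]

lemma trace_Q_strictMono {G H : SimpleGraph V} (h : H < G) : (Q H).trace < (Q G).trace := by
  obtain ⟨u, v, huv, hn⟩ : ∃ u v, G.Adj u v ∧ ¬ H.Adj u v := by
    by_contra! hc
    exact h.not_ge fun u v => hc u v
  rw [trace_Q, trace_Q]
  have hle (i j : V) : (@ite ℝ (H.Adj i j) (Classical.decRel _ i j) 1 0) ≤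
      @ite ℝ (G.Adj i j) (Classical.decRel _ i j) 1 0 := by
    split_ifs with h₁ h₂
    · exact le_rfl
    · exact absurd (h.le h₁) h₂
    · exact zero_le_one
    · exact le_rfl
  refine Finset.sum_lt_sum (fun i _ => Finset.sum_le_sum fun j _ => hle i j)
    ⟨u, mem_univ _, Finset.sum_lt_sum (fun j _ => hle u j) ⟨v, mem_univ _, ?_⟩⟩
  simp [huv, hn]

/-! ### Spectral facts -/

/-- Expansion of the quadratic form of a Hermitian matrix in an orthonormal eigenbasis. -/
lemma sum_sq_inner_mul_eigenvalues {A : Matrix V V ℝ} (hA : A.IsHermitian)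
    (x : EuclideanSpace ℝ V) :
    ∑ j, inner ℝ (hA.eigenvectorBasis j) x ^ 2 * hA.eigenvalues j
      = x.ofLp ⬝ᵥ (A *ᵥ x.ofLp) := by
  have h := hA.eigenvectorBasis.sum_inner_mul_inner x (WithLp.toLp 2 (A *ᵥ x.ofLp))
  have hx : inner ℝ x (WithLp.toLp 2 (A *ᵥ x.ofLp)) = x.ofLp ⬝ᵥ (A *ᵥ x.ofLp) := by
    simp [EuclideanSpace.inner_eq_star_dotProduct, dotProduct_comm]
  rw [← hx, ← h]
  refine Finset.sum_congr rfl fun j _ => ?_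
  have hj : inner ℝ (hA.eigenvectorBasis j) (WithLp.toLp 2 (A *ᵥ x.ofLp))
      = hA.eigenvalues j * inner ℝ (hA.eigenvectorBasis j) x := by
    have hs : Aᵀ = A := by simpa [IsHermitian] using hA
    simp only [EuclideanSpace.inner_eq_star_dotProduct, star_trivial]
    rw [dotProduct_comm, dotProduct_mulVec, ← mulVec_transpose, hs,
      hA.mulVec_eigenvectorBasis, smul_dotProduct, dotProduct_comm, smul_eq_mul]
  rw [hj, real_inner_comm]
  ring

lemma eigs_eq_dotProduct (G : SimpleGraph V) (i : V) :
    eigs G i = ((Q_isHermitian G).eigenvectorBasis i).ofLp ⬝ᵥ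
      (Q G *ᵥ ((Q_isHermitian G).eigenvectorBasis i).ofLp) := by
  rw [eigs, (Q_isHermitian G).eigenvalues_eq i]
  simp

lemma eigs_nonneg (G : SimpleGraph V) (i : V) : 0 ≤ eigs G i := by
  rw [eigs_eq_dotProduct]
  exact dotProduct_Q_mulVec_nonneg G _

lemma sum_eigs (G : SimpleGraph V) : ∑ i, eigs G i = (Q G).trace := by
  simp [eigs, (Q_isHermitian G).trace_eq_sum_eigenvalues]

/-! ### Comparison of power sums -/

/-- The convex function `x ↦ x ^ α` on the positive reals lies above its tangent line at `b`. -/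
lemma tangent_le_rpow {α a b : ℝ} (hα : α < 0) (ha : 0 < a) (hb : 0 < b) :
    b ^ α * (1 + α * (a / b - 1)) ≤ a ^ α := by
  have ht : 0 < a / b := div_pos ha hb
  have h₁ : 1 + α * (a / b - 1) ≤ (a / b) ^ α := by
    rw [Real.rpow_def_of_pos ht]
    have := Real.log_le_sub_one_of_pos ht
    have := Real.add_one_le_exp (Real.log (a / b) * α)
    nlinarith
  calc b ^ α * (1 + α * (a / b - 1)) ≤ b ^ α * (a / b) ^ α := by gcongr
    _ = a ^ α := by rw [← Real.mul_rpow hb.le ht.le, mul_div_cancel₀ _ hb.ne']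

/-- A doubly stochastic `w` with `w a ≤ b` and strictly smaller total mass of `a` makes the sum of
negative powers over the nonzero entries strictly larger for `a`, provided that `a` and `b` have
equally many zeros. -/
lemma sum_rpow_lt_of_doublyStochastic {α : ℝ} (hα : α < 0) {a b : V → ℝ} {w : V → V → ℝ}
    (ha : ∀ j, 0 ≤ a j) (hb : ∀ i, 0 ≤ b i) (hw : ∀ i j, 0 ≤ w i j)
    (hrow : ∀ i, ∑ j, w i j = 1) (hcol : ∀ j, ∑ i, w i j = 1)
    (hle : ∀ i, ∑ j, w i j * a j ≤ b i) (hlt : ∑ j, a j < ∑ i, b i)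
    (hcard : #{i | b i = 0} = #{j | a j = 0}) :
    ∑ i with b i ≠ 0, b i ^ α < ∑ j with a j ≠ 0, a j ^ α := by
  have hzero (i j : V) (hi : b i = 0) (hj : a j ≠ 0) : w i j = 0 := by
    have hnn : ∀ j ∈ univ, 0 ≤ w i j * a j := fun j _ => mul_nonneg (hw i j) (ha j)
    have h0 : ∑ j, w i j * a j = 0 := le_antisymm ((hle i).trans hi.le) (sum_nonneg hnn)
    exact (mul_eq_zero.1 ((sum_eq_zero_iff_of_nonneg hnn).1 h0 j (mem_univ j))).resolve_right hj
  -- The rows of zeros of `b` carry the whole mass of the columns of zeros of `a`, by counting.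
  have hblock : ∑ j with a j = 0, ∑ i with b i ≠ 0, w i j = 0 := by
    have h₁ : ∑ i with b i = 0, ∑ j with a j = 0, w i j = #{i | b i = 0} := by
      rw [card_eq_sum_ones, Nat.cast_sum]
      refine sum_congr rfl fun i hi => ?_
      rw [sum_filter_of_ne fun j _ hj => by_contra fun h => hj (hzero i j (by simpa using hi) h),
        hrow, Nat.cast_one]
    have h₂ : ∑ j with a j = 0, ∑ i, w i j = #{j | a j = 0} := by
      simp [hcol]
    have h₃ : ∑ j with a j = 0, ∑ i, w i j =
        ∑ j with a j = 0, ∑ i with b i = 0, w i j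
          + ∑ j with a j = 0, ∑ i with b i ≠ 0, w i j := by
      rw [← sum_add_distrib]
      exact sum_congr rfl fun j _ => (sum_filter_add_sum_filter_not _ _ _).symm
    rw [h₂, sum_comm, h₁, hcard] at h₃
    linarith
  have hzero' (i j : V) (hi : b i ≠ 0) (hj : a j = 0) : w i j = 0 := by
    have h := (sum_eq_zero_iff_of_nonneg fun j _ => sum_nonneg fun i _ => hw i j).1 hblock j
      (by simp [hj])
    exact (sum_eq_zero_iff_of_nonneg fun i _ => hw i j).1 h i (by simp [hi])
  have hsum : ∑ j with a j ≠ 0, a j ^ α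
      = ∑ i with b i ≠ 0, ∑ j with a j ≠ 0, w i j * a j ^ α := by
    rw [sum_comm]
    refine sum_congr rfl fun j hj => ?_
    have hc : ∑ i with b i ≠ 0, w i j = ∑ i, w i j :=
      sum_filter_of_ne fun i _ hi h => hi (hzero i j h (by simpa using hj))
    rw [← sum_mul, hc, hcol, one_mul]
  -- Weighted average over a row of the tangent inequality at `b i`.
  have htan (i : V) (hi : b i ≠ 0) :
      b i ^ α * (1 + α * ((∑ j, w i j * a j) / b i - 1))
        ≤ ∑ j with a j ≠ 0, w i j * a j ^ α := by
    have hr : ∑ j with a j ≠ 0, w i j = 1 := by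
      rw [← hrow i]
      exact sum_filter_of_ne fun j _ hj h => hj (hzero' i j hi h)
    have hc : ∑ j with a j ≠ 0, w i j * a j = ∑ j, w i j * a j :=
      sum_filter_of_ne fun j _ hj h => hj (by rw [h, mul_zero])
    calc b i ^ α * (1 + α * ((∑ j, w i j * a j) / b i - 1))
        = b i ^ α * ((1 - α) * (∑ j with a j ≠ 0, w i j)
            + α / b i * ∑ j with a j ≠ 0, w i j * a j) := by rw [hr, hc]; ring
      _ = ∑ j with a j ≠ 0, w i j * (b i ^ α * (1 + α * (a j / b i - 1))) := by
          rw [mul_sum, mul_sum, ← sum_add_distrib, mul_sum]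
          exact sum_congr rfl fun j _ => by ring
      _ ≤ ∑ j with a j ≠ 0, w i j * a j ^ α := by
          refine sum_le_sum fun j hj => mul_le_mul_of_nonneg_left ?_ (hw i j)
          exact tangent_le_rpow hα ((ha j).lt_of_ne' (by simpa using hj)) ((hb i).lt_of_ne' hi)
  obtain ⟨i₀, hi₀⟩ : ∃ i, ∑ j, w i j * a j < b i := by
    by_contra! hc
    have : ∑ i, ∑ j, w i j * a j = ∑ j, a j := by
      rw [sum_comm]
      exact sum_congr rfl fun j _ => by rw [← sum_mul, hcol, one_mul]
    have := sum_le_sum fun i (_ : i ∈ univ) => hc i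
    linarith
  have hi₀' : b i₀ ≠ 0 := by
    have : 0 ≤ ∑ j, w i₀ j * a j := sum_nonneg fun j _ => mul_nonneg (hw i₀ j) (ha j)
    exact (this.trans_lt hi₀).ne'
  rw [hsum]
  refine sum_lt_sum (fun i hi => ?_) ⟨i₀, by simpa using hi₀', ?_⟩
  · have hi : b i ≠ 0 := by simpa using hi
    have hpos := (hb i).lt_of_ne' hi
    refine le_trans (le_mul_of_one_le_right (Real.rpow_nonneg (hb i) α) ?_) (htan i hi)
    have := (div_le_one hpos).2 (hle i)
    nlinarith
  · have hpos := (hb i₀).lt_of_ne' hi₀'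
    refine lt_of_lt_of_le (lt_mul_of_one_lt_right (Real.rpow_pos_of_pos hpos α) ?_) (htan i₀ hi₀')
    have := (div_lt_one hpos).2 hi₀
    nlinarith

theorem S_alpha_gt_of_deleteEdge_neg (G : SimpleGraph V) (e : Sym2 V)
    (he : e ∈ G.edgeSet) (α : ℝ) (hα : α < 0)
    (hker : (Finset.univ.filter (fun v => eigs G v = 0)).card
      = (Finset.univ.filter (fun v => eigs (G.deleteEdges {e}) v = 0)).card) :
    S α G < S α (G.deleteEdges {e}) := by
  have hle : G.deleteEdges {e} ≤ G := G.deleteEdges_le {e}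
  have hlt : G.deleteEdges {e} < G := by
    refine lt_of_le_of_ne hle fun h => ?_
    have hn : e ∉ (G.deleteEdges {e}).edgeSet := by simp [SimpleGraph.edgeSet_deleteEdges]
    exact hn (by rw [h]; exact he)
  set H := G.deleteEdges {e}
  let u := (Q_isHermitian H).eigenvectorBasis
  let v := (Q_isHermitian G).eigenvectorBasis
  refine sum_rpow_lt_of_doublyStochastic hα (w := fun i j => inner ℝ (u j) (v i) ^ 2)
    (eigs_nonneg H) (eigs_nonneg G) (fun _ _ => sq_nonneg _) (fun i => ?_) (fun j => ?_)
    (fun i => ?_) ?_ hker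
  · simpa using u.sum_sq_norm_inner_right (v i)
  · simpa using v.sum_sq_norm_inner_left (u j)
  · rw [eigs_eq_dotProduct G]
    exact (sum_sq_inner_mul_eigenvalues (Q_isHermitian H) (v i)).trans_le
      (dotProduct_Q_mulVec_mono hle _)
  · rw [sum_eigs, sum_eigs]
    exact trace_Q_strictMono hlt

end SLP
end
end

section
/- Let G be a connected bipartite finite simple graph on n ≥ 2 vertices and let α be a real number with 0 < α ≤ 1. Then S_α(G) ≤ n^α + (⌊n/2⌋ − 1)·⌈n/2⌉^α + (⌈n/2⌉ − 1)·⌊n/2⌋^α, with equality if and only if G is the complete bipartite graph K_{⌊n/2⌋,⌈n/2⌉}. -/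
/-!
A connected bipartite graph on `n` vertices with parts of sizes `r ≤ s` is a spanning subgraph of
`K_{r,s}`, so `Q(G) ≤ Q(K_{r,s})` as quadratic forms. For a concave strictly increasing power
`t ↦ t ^ α` this yields `S α G ≤ S α K_{r,s}` by Jensen's inequality with the doubly stochastic
weights formed by the squared inner products of the two eigenbases (`sum_rpow_eigenvalues_le`,
`S_le_of_le`); equality forces equal traces, that is, equally many edges, so `G = K_{r,s}`.

The spectrum of `K_{r,s}` is `0`, `n`, `s` (`r - 1` times) and `r` (`s - 1` times)
(`charpoly_Q_completeBipartite`), so `S α K_{r,s} = n ^ α + (r - 1) s ^ α + (s - 1) r ^ α`. For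
fixed `r + s = n`, concavity of the power makes this strictly largest at the balanced partition
(`bipartite_value_lt`).
-/


open Matrix Finset

noncomputable section

namespace SLP

variable {V : Type*} [Fintype V] [DecidableEq V]

/-! ### Trace inequality for powers of ordered Hermitian matrices -/

/-- Parseval's identity in an eigenbasis, phrased with `⬝ᵥ` to stay within plain vectors. -/
lemma dot_eigenvectorBasis_sum {A : Matrix V V ℝ} (hA : A.IsHermitian) (x y : V → ℝ) :
    ∑ i, (x ⬝ᵥ ⇑(hA.eigenvectorBasis i)) * (⇑(hA.eigenvectorBasis i) ⬝ᵥ y) = x ⬝ᵥ y := by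
  have := hA.eigenvectorBasis.sum_inner_mul_inner (WithLp.toLp 2 x) (WithLp.toLp 2 y)
  simp only [EuclideanSpace.inner_eq_star_dotProduct, star_trivial] at this
  rw [dotProduct_comm x y, ← this]
  refine Finset.sum_congr rfl fun i _ => ?_
  rw [dotProduct_comm x, dotProduct_comm y]

/-- The quadratic form of a Hermitian matrix diagonalised in its eigenbasis. -/
lemma dot_mulVec_eq_sum {A : Matrix V V ℝ} (hA : A.IsHermitian) (x : V → ℝ) :
    x ⬝ᵥ A *ᵥ x = ∑ i, (x ⬝ᵥ ⇑(hA.eigenvectorBasis i)) ^ 2 * hA.eigenvalues i := by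
  rw [← dot_eigenvectorBasis_sum hA x (A *ᵥ x)]
  refine Finset.sum_congr rfl fun i _ => ?_
  have h : ⇑(hA.eigenvectorBasis i) ⬝ᵥ A *ᵥ x
      = (A *ᵥ ⇑(hA.eigenvectorBasis i)) ⬝ᵥ x := by
    rw [dotProduct_mulVec, ← mulVec_transpose]
    congr 2
  rw [h, hA.mulVec_eigenvectorBasis, smul_dotProduct, dotProduct_comm _ x, smul_eq_mul]
  ring

lemma eigenvectorBasis_dot_self {A : Matrix V V ℝ} (hA : A.IsHermitian) (i : V) :
    ⇑(hA.eigenvectorBasis i) ⬝ᵥ ⇑(hA.eigenvectorBasis i) = 1 := by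
  have := hA.eigenvectorBasis.orthonormal.1 i
  have h2 := real_inner_self_eq_norm_sq (hA.eigenvectorBasis i)
  rw [this, EuclideanSpace.inner_eq_star_dotProduct] at h2
  simpa using h2

lemma eigenvalues_eq_dot {A : Matrix V V ℝ} (hA : A.IsHermitian) (i : V) :
    hA.eigenvalues i = ⇑(hA.eigenvectorBasis i) ⬝ᵥ A *ᵥ ⇑(hA.eigenvectorBasis i) := by
  rw [hA.mulVec_eigenvectorBasis, dotProduct_smul, eigenvectorBasis_dot_self, smul_eq_mul, mul_one]

/-- If `0 ≤ A ≤ B` as quadratic forms then `tr A ^ α ≤ tr B ^ α` for `0 < α ≤ 1`, and equality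
forces `tr A = tr B`. With eigenvectors `v i` of `A` and `w j` of `B`, the weights
`(w j ⬝ᵥ v i) ^ 2` are doubly stochastic; Jensen's inequality for `t ↦ t ^ α` bounds the
`A`-average of eigenvalue powers at `w j` by `(w j ⬝ᵥ A *ᵥ w j) ^ α`, hence by the `α`-th power of
the `j`-th eigenvalue of `B`. This avoids sorting eigenvalues and Weyl's inequalities. -/
lemma sum_rpow_eigenvalues_le {A B : Matrix V V ℝ} (hA : A.IsHermitian) (hB : B.IsHermitian)
    (hA0 : ∀ x : V → ℝ, 0 ≤ x ⬝ᵥ A *ᵥ x) (hAB : ∀ x : V → ℝ, x ⬝ᵥ A *ᵥ x ≤ x ⬝ᵥ B *ᵥ x)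
    {α : ℝ} (hα0 : 0 < α) (hα1 : α ≤ 1) :
    ∑ i, hA.eigenvalues i ^ α ≤ ∑ j, hB.eigenvalues j ^ α ∧
      (∑ i, hA.eigenvalues i ^ α = ∑ j, hB.eigenvalues j ^ α → A.trace = B.trace) := by
  set v : V → V → ℝ := fun i => ⇑(hA.eigenvectorBasis i) with hv
  set w : V → V → ℝ := fun i => ⇑(hB.eigenvectorBasis i) with hw
  have hrow (j : V) : ∑ i, (w j ⬝ᵥ v i) ^ 2 = 1 := by
    rw [← eigenvectorBasis_dot_self hB j, ← dot_eigenvectorBasis_sum hA]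
    refine Finset.sum_congr rfl fun i _ => ?_
    rw [dotProduct_comm ⇑(hA.eigenvectorBasis i), sq]
  have hcol (i : V) : ∑ j, (w j ⬝ᵥ v i) ^ 2 = 1 := by
    rw [← eigenvectorBasis_dot_self hA i, ← dot_eigenvectorBasis_sum hB]
    refine Finset.sum_congr rfl fun j _ => ?_
    rw [dotProduct_comm ⇑(hA.eigenvectorBasis i), sq]
  -- summing against the doubly stochastic weights leaves the spectral sums of `A` unchanged
  have hswap (f : ℝ → ℝ) : ∑ j, ∑ i, (w j ⬝ᵥ v i) ^ 2 * f (hA.eigenvalues i)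
      = ∑ i, f (hA.eigenvalues i) := by
    rw [Finset.sum_comm]
    refine Finset.sum_congr rfl fun i _ => ?_
    rw [← Finset.sum_mul, hcol, one_mul]
  have hlam (i : V) : 0 ≤ hA.eigenvalues i := by
    rw [eigenvalues_eq_dot]; exact hA0 _
  have hjen (j : V) : ∑ i, (w j ⬝ᵥ v i) ^ 2 * hA.eigenvalues i ^ α ≤ (w j ⬝ᵥ A *ᵥ w j) ^ α := by
    rw [dot_mulVec_eq_sum hA]
    have := (Real.concaveOn_rpow hα0.le hα1).le_map_sum (t := Finset.univ)
      (w := fun i => (w j ⬝ᵥ v i) ^ 2) (p := fun i => hA.eigenvalues i)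
      (fun i _ => sq_nonneg _) (hrow j) (fun i _ => hlam i)
    simpa only [smul_eq_mul] using this
  have hmu (j : V) : w j ⬝ᵥ A *ᵥ w j ≤ hB.eigenvalues j := by
    rw [eigenvalues_eq_dot hB]; exact hAB _
  have hmono (j : V) : (w j ⬝ᵥ A *ᵥ w j) ^ α ≤ hB.eigenvalues j ^ α :=
    Real.rpow_le_rpow (hA0 _) (hmu j) hα0.le
  have h1 : ∑ i, hA.eigenvalues i ^ α ≤ ∑ j, (w j ⬝ᵥ A *ᵥ w j) ^ α := by
    rw [← hswap (fun t => t ^ α)]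
    exact Finset.sum_le_sum fun j _ => hjen j
  have h2 : ∑ j, (w j ⬝ᵥ A *ᵥ w j) ^ α ≤ ∑ j, hB.eigenvalues j ^ α :=
    Finset.sum_le_sum fun j _ => hmono j
  refine ⟨h1.trans h2, fun heq => ?_⟩
  have h3 := (Finset.sum_eq_sum_iff_of_le fun j _ => hmono j).1 (le_antisymm h2 (heq ▸ h1))
  have h4 (j : V) : w j ⬝ᵥ A *ᵥ w j = hB.eigenvalues j :=
    (Real.rpow_left_inj (hA0 _) ((hA0 _).trans (hmu j)) hα0.ne').1 (h3 j (Finset.mem_univ j))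
  rw [hA.trace_eq_sum_eigenvalues, hB.trace_eq_sum_eigenvalues]
  simp only [RCLike.ofReal_real_eq_id, id]
  rw [← hswap (fun t => t)]
  refine Finset.sum_congr rfl fun j _ => ?_
  rw [← h4, dot_mulVec_eq_sum hA]

/-! ### The signless Laplacian: entries, quadratic form, monotonicity and isomorphism -/

open Classical in
lemma Q_apply (G : SimpleGraph V) (i j : V) :
    Q G i j = if i = j then ∑ k, (if G.Adj i k then (1 : ℝ) else 0)
      else if G.Adj i j then 1 else 0 := by
  have h : Q G = G.degMatrix ℝ + G.adjMatrix ℝ := by unfold Q; congr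
  rw [h]
  by_cases hij : i = j
  · subst hij
    simp [SimpleGraph.degMatrix, SimpleGraph.adjMatrix_apply, ← SimpleGraph.card_neighborFinset_eq_degree,
      SimpleGraph.neighborFinset_eq_filter]
  · simp [SimpleGraph.degMatrix, SimpleGraph.adjMatrix_apply, hij]

open Classical in
/-- `Q(G)` is the form `∑ (x i + x j) ^ 2` over edges; the factor `1/2` is there because the sum
runs over ordered pairs. It gives both `Q(G) ≥ 0` and monotonicity of `Q` in the edge set. -/
lemma dot_Q_mulVec (G : SimpleGraph V) (x : V → ℝ) :
    x ⬝ᵥ Q G *ᵥ x = (∑ i, ∑ j, if G.Adj i j then (x i + x j) ^ 2 else 0) / 2 := by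
  have hQ (i j : V) : Q G i j = (if i = j then ∑ k, (if G.Adj i k then (1 : ℝ) else 0) else 0)
      + if G.Adj i j then 1 else 0 := by
    rw [Q_apply]
    by_cases hij : i = j
    · subst hij; simp
    · simp [hij]
  have h1 : x ⬝ᵥ Q G *ᵥ x = ∑ i, ∑ j, ((if G.Adj i j then x i ^ 2 else 0)
      + if G.Adj i j then x i * x j else 0) := by
    simp only [dotProduct, mulVec, hQ, add_mul, Finset.sum_add_distrib, ite_mul, zero_mul,
      Finset.sum_ite_eq, Finset.mem_univ, if_true, mul_add, one_mul]
    congr 1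
    · refine Finset.sum_congr rfl fun i _ => ?_
      rw [Finset.sum_mul, Finset.mul_sum]
      refine Finset.sum_congr rfl fun j _ => ?_
      split_ifs <;> ring
    · simp only [Finset.mul_sum, mul_ite, mul_zero]
  have h2 : ∑ i, ∑ j, (if G.Adj i j then x i ^ 2 else 0)
      = ∑ i, ∑ j, (if G.Adj i j then x j ^ 2 else 0) := by
    rw [Finset.sum_comm]
    simp only [G.adj_comm]
  have h3 : (∑ i, ∑ j, if G.Adj i j then (x i + x j) ^ 2 else 0)
      = ∑ i, ∑ j, (if G.Adj i j then x i ^ 2 else 0) + ∑ i, ∑ j, (if G.Adj i j then x j ^ 2 else 0)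
      + 2 * ∑ i, ∑ j, (if G.Adj i j then x i * x j else 0) := by
    simp only [Finset.mul_sum, ← Finset.sum_add_distrib]
    refine Finset.sum_congr rfl fun i _ => Finset.sum_congr rfl fun j _ => ?_
    split_ifs <;> ring
  rw [h1, h3, ← h2]
  simp only [Finset.sum_add_distrib]
  ring

/-- The restriction to nonzero eigenvalues is immaterial for `α > 0`, since `0 ^ α = 0`. -/
lemma S_eq_sum {α : ℝ} (hα : 0 < α) (G : SimpleGraph V) :
    S α G = ∑ v, (Q_isHermitian G).eigenvalues v ^ α := by
  rw [S, Finset.sum_filter]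
  refine Finset.sum_congr rfl fun v _ => ?_
  by_cases h : eigs G v = 0
  · simp [h, show (Q_isHermitian G).eigenvalues v = 0 from h, Real.zero_rpow hα.ne']
  · rw [if_pos h]; rfl

lemma S_eq_roots {α : ℝ} (hα : 0 < α) (G : SimpleGraph V) :
    S α G = ((Q G).charpoly.roots.map (fun t => t ^ α)).sum := by
  rw [S_eq_sum hα, (Q_isHermitian G).roots_charpoly_eq_eigenvalues, Multiset.map_map]
  rfl

lemma S_le_of_le {G H : SimpleGraph V} (h : G ≤ H) {α : ℝ} (hα0 : 0 < α) (hα1 : α ≤ 1) :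
    S α G ≤ S α H ∧ (S α G = S α H → G = H) := by
  classical
  rw [S_eq_sum hα0, S_eq_sum hα0]
  obtain ⟨h1, h2⟩ := sum_rpow_eigenvalues_le (Q_isHermitian G) (Q_isHermitian H)
    (fun x => by
      rw [dot_Q_mulVec]
      refine div_nonneg (Finset.sum_nonneg fun i _ => Finset.sum_nonneg fun j _ => ?_) (by norm_num)
      split_ifs <;> positivity)
    (fun x => by
      rw [dot_Q_mulVec, dot_Q_mulVec]
      gcongr with i _ j _
      by_cases hG : G.Adj i j
      · simp [hG, h hG]
      · rw [if_neg hG]; split_ifs <;> positivity) hα0 hα1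
  refine ⟨h1, fun he => ?_⟩
  -- equal traces mean equal degree sums, which for `G ≤ H` leaves no room for a missing edge
  have ht := h2 he
  simp only [Matrix.trace, Matrix.diag, Q_apply, if_true] at ht
  have hle (i j : V) : (if G.Adj i j then (1 : ℝ) else 0) ≤ if H.Adj i j then 1 else 0 := by
    by_cases hG : G.Adj i j
    · simp [hG, h hG]
    · rw [if_neg hG]; split_ifs <;> norm_num
  have h3 := (Finset.sum_eq_sum_iff_of_le fun i _ => Finset.sum_le_sum fun j _ => hle i j).1 ht
  refine le_antisymm h fun i j hij => ?_
  have h4 := (Finset.sum_eq_sum_iff_of_le fun j _ => hle i j).1 (h3 i (mem_univ i)) j (mem_univ j)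
  by_contra hG
  simp [hij, hG] at h4

lemma S_congr {W : Type*} [Fintype W] [DecidableEq W] {G : SimpleGraph V} {H : SimpleGraph W}
    (e : G ≃g H) {α : ℝ} (hα : 0 < α) : S α G = S α H := by
  classical
  have : Q H = Matrix.reindex e.toEquiv e.toEquiv (Q G) := by
    ext i j
    obtain ⟨i, rfl⟩ := e.surjective i
    obtain ⟨j, rfl⟩ := e.surjective j
    rw [Matrix.reindex_apply, Matrix.submatrix_apply, Q_apply, Q_apply,
      ← e.toEquiv.sum_comp]
    have hs (k : V) : e.toEquiv.symm (e k) = k := e.symm_apply_apply k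
    have he (k : V) : e.toEquiv k = e k := rfl
    simp only [hs, he, e.map_adj_iff, e.injective.eq_iff]
  rw [S_eq_roots hα, S_eq_roots hα, this, Matrix.charpoly_reindex]

/-! ### The spectrum of a complete bipartite graph -/

/-- The determinant of `a I + c J` with `J` the all-ones matrix, a rank-one perturbation. -/
lemma det_smul_one_add_const (q : ℕ) (a c : ℝ) (ha : a ≠ 0) :
    (a • (1 : Matrix (Fin (q + 1)) (Fin (q + 1)) ℝ) + Matrix.of fun _ _ => c).det
      = a ^ q * (a + (q + 1) * c) := by
  have h : a • (1 : Matrix (Fin (q + 1)) (Fin (q + 1)) ℝ) + (Matrix.of fun _ _ => c)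
      = a • (1 + replicateCol Unit (fun _ => c / a) * replicateRow Unit (fun _ => (1 : ℝ))) := by
    ext i j
    simp [Matrix.mul_apply, mul_add, mul_div_cancel₀ _ ha]
  rw [h, det_smul, det_one_add_replicateCol_mul_replicateRow]
  simp [dotProduct]
  rw [pow_succ]
  field_simp

open Polynomial in
/-- The signless Laplacian spectrum of `K_{p+1,q+1}` with multiplicities. Away from the two degrees,
the top left block of `x I - Q` is invertible and its Schur complement has the form `a I + c J`;
the resulting identity at cofinitely many `x` determines the polynomial. -/
lemma charpoly_Q_completeBipartite (p q : ℕ) :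
    (Q (completeBipartiteGraph (Fin (p + 1)) (Fin (q + 1)))).charpoly
      = X * (X - C ((p : ℝ) + q + 2)) * (X - C ((q : ℝ) + 1)) ^ p * (X - C ((p : ℝ) + 1)) ^ q := by
  classical
  apply Polynomial.eq_of_infinite_eval_eq
  refine Set.Infinite.mono (s := ({(q : ℝ) + 1, (p : ℝ) + 1} : Set ℝ)ᶜ) ?_
    (Set.toFinite _).infinite_compl
  intro x hx
  simp only [Set.mem_compl_iff, Set.mem_insert_iff, Set.mem_singleton_iff, not_or] at hx
  obtain ⟨hxq, hxp⟩ := hx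
  have hq : x - (q + 1) ≠ 0 := sub_ne_zero.2 hxq
  have hp : x - (p + 1) ≠ 0 := sub_ne_zero.2 hxp
  have hblock : Matrix.scalar _ x - Q (completeBipartiteGraph (Fin (p + 1)) (Fin (q + 1)))
      = fromBlocks ((x - (q + 1)) • 1) (Matrix.of fun _ _ => -1) (Matrix.of fun _ _ => -1)
        ((x - (p + 1)) • 1) := by
    ext i j
    rcases i with i | i <;> rcases j with j | j <;>
      simp [Q_apply, Matrix.one_apply, Matrix.diagonal_apply, Fintype.sum_sum_type,
        -Finset.sum_boole] <;> split_ifs <;> simp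
  have hu : IsUnit ((x - (q + 1)) • (1 : Matrix (Fin (p + 1)) (Fin (p + 1)) ℝ)).det := by
    simp [hq]
  letI : Invertible ((x - (q + 1)) • (1 : Matrix (Fin (p + 1)) (Fin (p + 1)) ℝ)) :=
    Matrix.invertibleOfIsUnitDet _ hu
  have hinv : ⅟((x - (q + 1)) • (1 : Matrix (Fin (p + 1)) (Fin (p + 1)) ℝ))
      = (x - (q + 1))⁻¹ • 1 := by
    apply invOf_eq_right_inv
    simp [smul_smul, hq]
  have hschur : (x - (p + 1)) • (1 : Matrix (Fin (q + 1)) (Fin (q + 1)) ℝ)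
      - (Matrix.of fun _ _ => -1 : Matrix (Fin (q + 1)) (Fin (p + 1)) ℝ)
        * ((x - (q + 1))⁻¹ • (1 : Matrix (Fin (p + 1)) (Fin (p + 1)) ℝ)) * (Matrix.of fun _ _ => -1 : Matrix (Fin (p + 1)) (Fin (q + 1)) ℝ)
      = (x - (p + 1)) • 1 + Matrix.of fun _ _ => -((p + 1) * (x - (q + 1))⁻¹) := by
    ext i j
    simp [Matrix.mul_apply]
    ring
  change eval x _ = eval x _
  rw [Matrix.eval_charpoly, hblock, det_fromBlocks₁₁, hinv, hschur,
    det_smul_one_add_const _ _ _ hp]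
  simp only [det_smul, Fintype.card_fin, det_one, mul_one, eval_mul, eval_pow, eval_sub, eval_X,
    eval_C]
  field_simp
  ring

lemma S_completeBipartite (p q : ℕ) {α : ℝ} (hα : 0 < α) :
    S α (completeBipartiteGraph (Fin (p + 1)) (Fin (q + 1)))
      = ((p : ℝ) + q + 2) ^ α + p * ((q : ℝ) + 1) ^ α + q * ((p : ℝ) + 1) ^ α := by
  rw [S_eq_roots hα, charpoly_Q_completeBipartite]
  have hne (a : ℝ) : (Polynomial.X - Polynomial.C a) ≠ 0 := Polynomial.X_sub_C_ne_zero a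
  have h0 : (Polynomial.X : Polynomial ℝ) ≠ 0 := Polynomial.X_ne_zero
  rw [Polynomial.roots_mul (mul_ne_zero (mul_ne_zero (mul_ne_zero h0 (hne _)) (pow_ne_zero _ (hne _)))
      (pow_ne_zero _ (hne _))),
    Polynomial.roots_mul (mul_ne_zero (mul_ne_zero h0 (hne _)) (pow_ne_zero _ (hne _))),
    Polynomial.roots_mul (mul_ne_zero h0 (hne _))]
  simp only [Polynomial.roots_pow, Polynomial.roots_X, Polynomial.roots_X_sub_C, Multiset.map_add,
    Multiset.map_nsmul, Multiset.map_singleton, Multiset.sum_add, Multiset.sum_nsmul,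
    Multiset.sum_singleton, nsmul_eq_mul, Real.zero_rpow hα.ne', zero_add]

/-! ### Balanced parts are optimal -/

/-- The `r`, `s`-dependent part of `S α (K_{r,s})` strictly increases as the part sizes, with fixed
sum, become more balanced. Writing `a = l r + m s` and `b = m r + l s` with `l + m = 1`, concavity of
`t ↦ t ^ α` leaves a surplus of at least `2 l m (s - r) (s ^ α - r ^ α)`. -/
lemma bipartite_value_lt {α r s a b : ℝ} (hα0 : 0 < α) (hα1 : α ≤ 1) (hr : 1 ≤ r) (hra : r < a)
    (hab : a ≤ b) (hsum : r + s = a + b) :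
    (r - 1) * s ^ α + (s - 1) * r ^ α < (a - 1) * b ^ α + (b - 1) * a ^ α := by
  have hrs : 0 < s - r := by linarith
  set l : ℝ := (s - a) / (s - r) with hl
  set m : ℝ := (a - r) / (s - r) with hm
  have hl0 : 0 < l := div_pos (by linarith) hrs
  have hm0 : 0 < m := div_pos (by linarith) hrs
  have hlm : l + m = 1 := by rw [hl, hm]; field_simp; ring
  have ha : a = l * r + m * s := by rw [hl, hm]; field_simp; ring
  have hb : b = m * r + l * s := by linear_combination -hsum - ha - (r + s) * hlm
  have hconc := Real.concaveOn_rpow hα0.le hα1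
  have hr0 : (0 : ℝ) ≤ r := by linarith
  have hs0 : (0 : ℝ) ≤ s := by linarith
  have hca := hconc.2 hr0 hs0 hl0.le hm0.le hlm
  have hcb := hconc.2 hr0 hs0 hm0.le hl0.le (by linarith)
  simp only [smul_eq_mul] at hca hcb
  rw [← ha] at hca
  rw [← hb] at hcb
  have hRS : r ^ α < s ^ α := Real.rpow_lt_rpow hr0 (by linarith) hα0
  have e1 := mul_le_mul_of_nonneg_left hcb (show 0 ≤ a - 1 by linarith)
  have e2 := mul_le_mul_of_nonneg_left hca (show 0 ≤ b - 1 by linarith)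
  have e3 : 0 < 2 * (l * m) * (s - r) * (s ^ α - r ^ α) := by
    have := sub_pos.2 hRS
    positivity
  have hm' : m = 1 - l := by linarith
  have e4 : (a - 1) * (m * r ^ α + l * s ^ α) + (b - 1) * (l * r ^ α + m * s ^ α)
      = (r - 1) * s ^ α + (s - 1) * r ^ α + 2 * (l * m) * (s - r) * (s ^ α - r ^ α) := by
    rw [ha, hb, hm']; ring
  linarith

/-! ### Embedding into a complete bipartite graph and the extremal bound -/

/-- A connected bipartite graph on at least two vertices is a spanning subgraph of a complete bipartite graph
with nonempty parts, listed with the smaller part first. -/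
lemma exists_le_completeBipartite {G : SimpleGraph V} (hconn : G.Connected) (hbip : G.Colorable 2)
    (hV : 2 ≤ Fintype.card V) :
    ∃ (p q : ℕ), p ≤ q ∧ p + 1 + (q + 1) = Fintype.card V ∧
      ∃ H : SimpleGraph (Fin (p + 1) ⊕ Fin (q + 1)),
        H ≤ completeBipartiteGraph (Fin (p + 1)) (Fin (q + 1)) ∧ Nonempty (G ≃g H) := by
  classical
  haveI : Nontrivial V := Fintype.one_lt_card_iff_nontrivial.1 (by omega)
  obtain ⟨c⟩ := hbip
  obtain ⟨u⟩ := hconn.nonempty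
  obtain ⟨w, huw⟩ := hconn.preconnected.exists_adj_of_nontrivial u
  have hcuw : c u ≠ c w := c.valid huw
  -- `k` is a colour whose class is not larger than the other one
  have key : ∃ k : Fin 2, Fintype.card {v // c v = k} ≤ Fintype.card {v // ¬ c v = k} := by
    have h := fun k : Fin 2 => Fintype.card_subtype_compl (fun v => c v = k)
    have h01 : Fintype.card {v // ¬ c v = 0} = Fintype.card {v // c v = 1} :=
      Fintype.card_congr (Equiv.subtypeEquivRight fun v => by omega)
    have h10 : Fintype.card {v // ¬ c v = 1} = Fintype.card {v // c v = 0} :=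
      Fintype.card_congr (Equiv.subtypeEquivRight fun v => by omega)
    rcases le_total (Fintype.card {v // c v = 0}) (Fintype.card {v // c v = 1}) with hle | hle
    · exact ⟨0, by omega⟩
    · exact ⟨1, by omega⟩
  obtain ⟨k, hk⟩ := key
  have hne : (∃ v, c v = k) ∧ ∃ v, ¬ c v = k := by
    by_cases h : c u = k
    · exact ⟨⟨u, h⟩, w, fun h' => hcuw (h.trans h'.symm)⟩
    · exact ⟨⟨w, by omega⟩, u, h⟩
  have hc1 : 0 < Fintype.card {v // c v = k} := Fintype.card_pos_iff.2 ⟨⟨_, hne.1.choose_spec⟩⟩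
  have hcard : Fintype.card {v // c v = k} + Fintype.card {v // ¬ c v = k} = Fintype.card V := by
    rw [← Fintype.card_sum]; exact Fintype.card_congr (Equiv.sumCompl _)
  obtain ⟨p, hp⟩ := Nat.exists_eq_add_of_lt hc1
  obtain ⟨q, hq⟩ := Nat.exists_eq_add_of_lt (hc1.trans_le hk)
  rw [Nat.zero_add] at hp hq
  let e : V ≃ Fin (p + 1) ⊕ Fin (q + 1) := (Equiv.sumCompl fun v => c v = k).symm.trans
    (Equiv.sumCongr (Fintype.equivFinOfCardEq hp) (Fintype.equivFinOfCardEq hq))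
  have he (v : V) : (e v).isLeft = true ↔ c v = k := by
    by_cases h : c v = k <;> simp [e, h]
  have he' (v : V) : (e v).isRight = true ↔ ¬ c v = k := by
    simp [← he]
  refine ⟨p, q, by omega, by omega, G.map e.toEmbedding, ?_, ⟨SimpleGraph.Iso.map e G⟩⟩
  intro x y hxy
  obtain ⟨x', y', hadj, rfl, rfl⟩ := (SimpleGraph.map_adj _ _ _ _).1 hxy
  have := c.valid hadj
  change ((e x').isLeft = true ∧ (e y').isRight = true) ∨ ((e x').isRight = true ∧ (e y').isLeft = true)
  rw [he, he, he', he']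
  omega

theorem S_alpha_le_balanced_bipartite {n : ℕ} (hn : 2 ≤ n)
    (hcard : Fintype.card V = n) (G : SimpleGraph V) (hconn : G.Connected)
    (hbip : G.Colorable 2) (α : ℝ) (hα0 : 0 < α) (hα1 : α ≤ 1) :
    S α G ≤ (n : ℝ) ^ α + (((n / 2 : ℕ) : ℝ) - 1) * (((n + 1) / 2 : ℕ) : ℝ) ^ α + ((((n + 1) / 2 : ℕ) : ℝ) - 1) * ((n / 2 : ℕ) : ℝ) ^ α ∧
    (S α G = (n : ℝ) ^ α + (((n / 2 : ℕ) : ℝ) - 1) * (((n + 1) / 2 : ℕ) : ℝ) ^ α + ((((n + 1) / 2 : ℕ) : ℝ) - 1) * ((n / 2 : ℕ) : ℝ) ^ α ↔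
      Nonempty (G ≃g completeBipartiteGraph (Fin (n / 2)) (Fin ((n + 1) / 2)))) := by
  obtain ⟨p, q, hpq, hsum, H, hH, ⟨e⟩⟩ := exists_le_completeBipartite hconn hbip (hcard ▸ hn)
  rw [hcard] at hsum
  obtain ⟨a, ha⟩ : ∃ a, n / 2 = a + 1 := ⟨n / 2 - 1, by omega⟩
  obtain ⟨b, hb⟩ : ∃ b, (n + 1) / 2 = b + 1 := ⟨(n + 1) / 2 - 1, by omega⟩
  rw [ha, hb]
  have hnab : (n : ℝ) = (a : ℝ) + b + 2 := by
    have : n = a + b + 2 := by omega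
    rw [this]; push_cast; ring
  have hnpq : (n : ℝ) = (p : ℝ) + q + 2 := by
    have : n = p + q + 2 := by omega
    rw [this]; push_cast; ring
  have hbound : (n : ℝ) ^ α + (((a + 1 : ℕ) : ℝ) - 1) * ((b + 1 : ℕ) : ℝ) ^ α
      + (((b + 1 : ℕ) : ℝ) - 1) * ((a + 1 : ℕ) : ℝ) ^ α
      = S α (completeBipartiteGraph (Fin (a + 1)) (Fin (b + 1))) := by
    rw [S_completeBipartite a b hα0, hnab]
    push_cast
    simp only [add_sub_cancel_right]
  rw [hbound, S_congr e hα0]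
  obtain ⟨hle, heq⟩ := S_le_of_le hH hα0 hα1
  have hcases : (p = a ∧ q = b) ∨ S α (completeBipartiteGraph (Fin (p + 1)) (Fin (q + 1)))
      < S α (completeBipartiteGraph (Fin (a + 1)) (Fin (b + 1))) := by
    rcases Nat.lt_or_ge p a with hlt | hge
    · right
      have hlt' : (p : ℝ) < a := by exact_mod_cast hlt
      have hab : (a : ℝ) ≤ b := by exact_mod_cast (show a ≤ b by omega)
      have := bipartite_value_lt (r := p + 1) (s := q + 1) (a := a + 1) (b := b + 1) hα0 hα1
        (by linarith [Nat.cast_nonneg (α := ℝ) p]) (by linarith) (by linarith) (by linarith)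
      rw [S_completeBipartite p q hα0, S_completeBipartite a b hα0, ← hnab, ← hnpq]
      simp only [add_sub_cancel_right] at this
      linarith
    · left; omega
  have hback : Nonempty (G ≃g completeBipartiteGraph (Fin (a + 1)) (Fin (b + 1))) →
      S α H = S α (completeBipartiteGraph (Fin (a + 1)) (Fin (b + 1))) := by
    rintro ⟨f⟩
    rw [← S_congr e hα0, S_congr f hα0]
  rcases hcases with ⟨rfl, rfl⟩ | hlt
  · exact ⟨hle, fun h => ⟨heq h ▸ e⟩, hback⟩
  · exact ⟨(hle.trans_lt hlt).le, fun h => absurd h (hle.trans_lt hlt).ne, hback⟩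

end SLP
end
end
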